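/- Let D be a positive natural number, p : ℝ → ℝ^D → ℝ a smooth everywhere-positive function, F : ℝ → ℝ^D → ℝ^D a smooth time-dependent vector field, g : ℝ → ℝ, and β : ℝ → ℝ. If p satisfies the Fokker–Planck equation ∂_t p(t,x) = -div_x(F(t,x)·p(t,x)) + (1/2)·g(t)²·Δ_x p(t,x) for all t ∈ ℝ and x ∈ ℝ^D, then for all t and x: ∂_t log p(t,x) + ⟨∇_x log p(t,x), F(t,x) - (1/2 - β(t))·g(t)²·∇_x log p(t,x)⟩ + β(t)·g(t)²·Δ_x log p(t,x) = -div_x F(t,x) + (1/2 + β(t))·g(t)²·Δ_x log p(t,x) + β(t)·g(t)²·‖∇_x log p(t,x)‖². -/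

import Mathlib

open scoped BigOperators RealInnerProductSpace
open MeasureTheory

/-- Divergence of a vector field on `EuclideanSpace ℝ (Fin D)`. -/
noncomputable def divg {D : ℕ} (F : EuclideanSpace ℝ (Fin D) → EuclideanSpace ℝ (Fin D))
    (x : EuclideanSpace ℝ (Fin D)) : ℝ :=
  ∑ i, fderiv ℝ F x (EuclideanSpace.single i 1) i

/-- Laplacian of a scalar field on `EuclideanSpace ℝ (Fin D)`. -/
noncomputable def lap {D : ℕ} (f : EuclideanSpace ℝ (Fin D) → ℝ)
    (x : EuclideanSpace ℝ (Fin D)) : ℝ :=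
  divg (gradient f) x

/-!
Since `∇p = p • ∇ log p`, the product rule for the divergence gives `Δp = p (Δ log p + ‖∇ log p‖²)`.
Dividing the Fokker–Planck equation by `p` therefore turns it into an equation for `log p`,
which is substituted for the time derivative in the Itô drift.
-/

section Gradient

variable {E : Type*} [NormedAddCommGroup E] [InnerProductSpace ℝ E] [CompleteSpace E]
  {u : E → ℝ} {x : E}

theorem differentiableAt_gradient_of_contDiffAt (hu : ContDiffAt ℝ 2 u x) :
    DifferentiableAt ℝ (gradient u) x :=
  (InnerProductSpace.toDual ℝ E).symm.toContinuousLinearEquiv.differentiableAt.comp x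
    ((hu.fderiv_right (m := 1) (by norm_num)).differentiableAt one_ne_zero)

theorem gradient_eq_smul_gradient_log (hu : DifferentiableAt ℝ u x) (hux : u x ≠ 0) :
    gradient u x = u x • gradient (fun y => Real.log (u y)) x := by
  rw [gradient, gradient, fderiv.log hu hux, map_smul, smul_inv_smul₀ hux]

end Gradient

section Euclidean

variable {D : ℕ}

theorem gradient_apply_eq_fderiv_single (u : EuclideanSpace ℝ (Fin D) → ℝ)
    (x : EuclideanSpace ℝ (Fin D)) (i : Fin D) :
    gradient u x i = fderiv ℝ u x (EuclideanSpace.single i 1) := by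
  rw [← inner_gradient_left, EuclideanSpace.inner_single_right, one_mul, conj_trivial]

variable {u : EuclideanSpace ℝ (Fin D) → ℝ}
  {V W : EuclideanSpace ℝ (Fin D) → EuclideanSpace ℝ (Fin D)} {x : EuclideanSpace ℝ (Fin D)}

theorem divg_congr_of_eventuallyEq (h : V =ᶠ[nhds x] W) : divg V x = divg W x := by
  rw [divg, divg, h.fderiv_eq]

theorem divg_smul (hu : DifferentiableAt ℝ u x) (hV : DifferentiableAt ℝ V x) :
    divg (fun y => u y • V y) x = u x * divg V x + ⟪gradient u x, V x⟫ := by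
  rw [divg, divg, fderiv_fun_smul hu hV, PiLp.inner_apply, Finset.mul_sum,
    ← Finset.sum_add_distrib]
  refine Finset.sum_congr rfl fun i _ => ?_
  simp [gradient_apply_eq_fderiv_single, mul_comm]

theorem lap_eq_mul_lap_log_add_sq_norm_gradient_log (hu : ContDiffAt ℝ 2 u x) (hux : u x ≠ 0) :
    lap u x = u x * (lap (fun y => Real.log (u y)) x
      + ‖gradient (fun y => Real.log (u y)) x‖ ^ 2) := by
  have hu_diff : DifferentiableAt ℝ u x := hu.differentiableAt two_ne_zero
  have hgrad : gradient u =ᶠ[nhds x] fun y => u y • gradient (fun z => Real.log (u z)) y := by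
    filter_upwards [hu.eventually (by simp), hu.continuousAt.eventually_ne hux] with y hy hy₀
    exact gradient_eq_smul_gradient_log (hy.differentiableAt two_ne_zero) hy₀
  calc
    lap u x = divg (fun y => u y • gradient (fun z => Real.log (u z)) y) x :=
      divg_congr_of_eventuallyEq hgrad
    _ = u x * lap (fun y => Real.log (u y)) x
          + ⟪gradient u x, gradient (fun y => Real.log (u y)) x⟫ :=
      divg_smul hu_diff (differentiableAt_gradient_of_contDiffAt (hu.log hux))
    _ = _ := by
      rw [gradient_eq_smul_gradient_log hu_diff hux, real_inner_smul_left,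
        real_inner_self_eq_norm_sq, mul_add]

theorem deriv_log_of_fokkerPlanck {p : ℝ → EuclideanSpace ℝ (Fin D) → ℝ} {t c : ℝ}
    (hpt : DifferentiableAt ℝ (fun τ => p τ x) t) (hpx : ContDiffAt ℝ 2 (p t) x)
    (hp₀ : p t x ≠ 0) (hV : DifferentiableAt ℝ V x)
    (hFP : deriv (fun τ => p τ x) t = -divg (fun y => p t y • V y) x + c * lap (p t) x) :
    deriv (fun τ => Real.log (p τ x)) t
      = -divg V x - ⟪gradient (fun y => Real.log (p t y)) x, V x⟫
        + c * (lap (fun y => Real.log (p t y)) x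
          + ‖gradient (fun y => Real.log (p t y)) x‖ ^ 2) := by
  have hp_diff : DifferentiableAt ℝ (p t) x := hpx.differentiableAt two_ne_zero
  rw [deriv.log hpt hp₀, div_eq_iff hp₀, hFP, divg_smul hp_diff hV,
    gradient_eq_smul_gradient_log hp_diff hp₀, real_inner_smul_left,
    lap_eq_mul_lap_log_add_sq_norm_gradient_log hpx hp₀]
  ring

theorem ito_drift_general_forward_general {p : ℝ → EuclideanSpace ℝ (Fin D) → ℝ}
    {F : ℝ → EuclideanSpace ℝ (Fin D) → EuclideanSpace ℝ (Fin D)} {g β : ℝ → ℝ} {t : ℝ}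
    (hpt : DifferentiableAt ℝ (fun τ => p τ x) t) (hpx : ContDiffAt ℝ 2 (p t) x)
    (hppos : 0 < p t x) (hF : DifferentiableAt ℝ (F t) x)
    (hFP : deriv (fun τ => p τ x) t
      = -divg (fun y => p t y • F t y) x + (1 / 2) * g t ^ 2 * lap (p t) x) :
    deriv (fun τ => Real.log (p τ x)) t
        + ⟪gradient (fun y => Real.log (p t y)) x,
            F t x - ((1 / 2 - β t) * g t ^ 2) • gradient (fun y => Real.log (p t y)) x⟫
        + β t * g t ^ 2 * lap (fun y => Real.log (p t y)) x
      = - divg (F t) x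
        + (1 / 2 + β t) * g t ^ 2 * lap (fun y => Real.log (p t y)) x
        + β t * g t ^ 2 * ‖gradient (fun y => Real.log (p t y)) x‖ ^ 2 := by
  rw [deriv_log_of_fokkerPlanck hpt hpx hppos.ne' hF hFP, inner_sub_right, real_inner_smul_right,
    real_inner_self_eq_norm_sq]
  ring

end Euclidean

/-- Itô drift of `log p` along the general β-forward SDE of Karras et al.
(analytic core of the Appendix G forward proposition). -/
theorem ito_drift_general_forward {D : ℕ} (hD : 0 < D)
    (p : ℝ → EuclideanSpace ℝ (Fin D) → ℝ)
    (F : ℝ → EuclideanSpace ℝ (Fin D) → EuclideanSpace ℝ (Fin D))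
    (g β : ℝ → ℝ)
    (hp : ContDiff ℝ (⊤ : ℕ∞) (fun q : ℝ × EuclideanSpace ℝ (Fin D) => p q.1 q.2))
    (hppos : ∀ t x, 0 < p t x)
    (hF : ContDiff ℝ (⊤ : ℕ∞) (fun q : ℝ × EuclideanSpace ℝ (Fin D) => F q.1 q.2))
    (hFP : ∀ t x, deriv (fun τ => p τ x) t
      = - divg (fun y => p t y • F t y) x + (1 / 2) * g t ^ 2 * lap (p t) x) :
    ∀ t x, deriv (fun τ => Real.log (p τ x)) t
        + ⟪gradient (fun y => Real.log (p t y)) x,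
            F t x - ((1 / 2 - β t) * g t ^ 2) • gradient (fun y => Real.log (p t y)) x⟫
        + β t * g t ^ 2 * lap (fun y => Real.log (p t y)) x
      = - divg (F t) x
        + (1 / 2 + β t) * g t ^ 2 * lap (fun y => Real.log (p t y)) x
        + β t * g t ^ 2 * ‖gradient (fun y => Real.log (p t y)) x‖ ^ 2 := fun t x =>
  have hpx : ContDiff ℝ (⊤ : ℕ∞) (p t) := hp.comp (contDiff_prodMk_right t)
  ito_drift_general_forward_general
    ((hp.comp (contDiff_prodMk_left x)).differentiable (by simp) t)
    (hpx.contDiffAt.of_le (WithTop.coe_le_coe.2 le_top)) (hppos t x)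
    ((hF.comp (contDiff_prodMk_right t)).differentiable (by simp) x) (hFP t x)
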